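/- For every d ∈ ℕ there exist constants c₁(d), c₂(d) > 0 such that for every n = (n_1, …, n_d) ∈ ℕ^d and every m ≤ c₁(d) (n_1⋯n_d)/max_j{n_j}, one has Θ_m(T(n)_∞, L_1[−π,π]^d) ≥ c₂(d). -/

import Mathlib

open MeasureTheory

/-- The finite box `∏_j [-n_j, n_j]` of integer frequency vectors. -/
noncomputable def trigBox (d : ℕ) (n : Fin d → ℕ) : Finset (Fin d → ℤ) :=
  Finset.Icc (fun j => -(n j : ℤ)) (fun j => (n j : ℤ))

/-- `T(n)_∞`: real trigonometric polynomials with spectrum in `∏_j [-n_j, n_j]` and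
sup-norm at most `1` on `[-π,π]^d`. -/
def TrigClass (d : ℕ) (n : Fin d → ℕ) : Set ((Fin d → ℝ) → ℝ) :=
  {t | (∃ c : (Fin d → ℤ) → ℂ, (∀ k, c (-k) = starRingEnd ℂ (c k)) ∧
        ∀ x : Fin d → ℝ, (t x : ℂ) =
          ∑ k ∈ trigBox d n, c k * Complex.exp (Complex.I * ∑ j, (k j : ℂ) * (x j : ℂ))) ∧
      ∀ x : Fin d → ℝ, (∀ j, x j ∈ Set.Icc (-Real.pi) Real.pi) → |t x| ≤ 1}

/-- The error of best `m`-term approximation of `f` by sums of tensor products, in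
`L₁(μ)`. -/
noncomputable def theta1 (d m : ℕ) (μ : Measure (Fin d → ℝ)) (f : (Fin d → ℝ) → ℝ) :
    ℝ :=
  sInf {r : ℝ | ∃ u : Fin m → Fin d → ℝ → ℝ,
    (∀ s i, Measurable (u s i)) ∧
    Integrable (fun x : Fin d → ℝ => ∑ s, ∏ i, u s i (x i)) μ ∧
    r = ∫ x, |f x - ∑ s, ∏ i, u s i (x i)| ∂μ}

section Aux

open Finset

noncomputable def sgnv {ι : Type*} [DecidableEq ι] (A : Finset ι) (k : ι) : ℝ :=
  if k ∈ A then 1 else -1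

/-- Sets of size at most `N/40`. -/
def smallSets (ι : Type*) [Fintype ι] [DecidableEq ι] : Finset (Finset ι) :=
  Finset.univ.filter fun A => 40 * A.card ≤ Fintype.card ι

lemma smallSets_card (ι : Type*) [Fintype ι] [DecidableEq ι] :
    ((smallSets ι).card : ℝ) ^ 4 ≤ 2 ^ Fintype.card ι := by
  set N := Fintype.card ι
  have h1 : ((smallSets ι).card : ℝ) ≤ ((106/100 : ℝ) * ((100/106 : ℝ)^40 + 1)) ^ N := by
    have h2 : ((smallSets ι).card : ℝ) ≤
        ∑ A ∈ smallSets ι, (106/100 : ℝ)^N * ((100/106 : ℝ)^40)^A.card := by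
      rw [Finset.card_eq_sum_ones, Nat.cast_sum]
      apply Finset.sum_le_sum
      intro A hA
      have hA' : 40 * A.card ≤ N := by simpa [smallSets] using hA
      have h3 : (106/100 : ℝ)^N = (106/100 : ℝ)^(40 * A.card) * (106/100 : ℝ)^(N - 40 * A.card) := by
        rw [← pow_add]; congr 1; omega
      have h4 : (1:ℝ) ≤ (106/100 : ℝ)^(N - 40 * A.card) := one_le_pow₀ (by norm_num)
      have h5 : (106/100 : ℝ)^(40 * A.card) * ((100/106 : ℝ)^40)^A.card = 1 := by
        rw [← pow_mul, ← mul_pow]; norm_num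
      rw [h3, mul_right_comm, h5]
      simpa using h4
    refine h2.trans ?_
    calc _ ≤ ∑ A : Finset ι, (106/100 : ℝ)^N * ((100/106 : ℝ)^40)^A.card :=
          Finset.sum_le_sum_of_subset_of_nonneg (Finset.subset_univ _)
            (fun _ _ _ => by positivity)
      _ = _ := by
          rw [← Finset.mul_sum, mul_pow]
          congr 1
          have := Fintype.sum_pow_mul_eq_add_pow ι ((100/106 : ℝ)^40) 1
          simpa using this
  calc ((smallSets ι).card : ℝ) ^ 4 ≤ (((106/100 : ℝ) * ((100/106 : ℝ)^40 + 1)) ^ N)^4 := by gcongr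
    _ = (((106/100 : ℝ) * ((100/106 : ℝ)^40 + 1)) ^ 4) ^ N := by rw [← pow_mul, ← pow_mul, Nat.mul_comm]
    _ ≤ 2 ^ N := by gcongr; norm_num

lemma greedy_code {ι : Type*} [Fintype ι] [DecidableEq ι] (F : Finset (Finset ι)) :
    ∃ E ⊆ F, (∀ A ∈ E, ∀ A' ∈ E, A ≠ A' → Fintype.card ι < 40 * (symmDiff A A').card) ∧
      F.card ≤ E.card * (smallSets ι).card := by
  classical
  let S := F.powerset.filter fun E => ∀ A ∈ E, ∀ A' ∈ E, A ≠ A' →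
    Fintype.card ι < 40 * (symmDiff A A').card
  have hS : S.Nonempty := ⟨∅, by simp [S]⟩
  obtain ⟨E, hE, hmax⟩ := S.exists_max_image Finset.card hS
  have hE' := hE
  simp only [S, mem_filter, mem_powerset] at hE'
  refine ⟨E, hE'.1, hE'.2, ?_⟩
  have hcov : F ⊆ E.biUnion fun A => (smallSets ι).image fun D => symmDiff A D := by
    intro A hA
    simp only [mem_biUnion, mem_image]
    by_contra hcon
    push Not at hcon
    have hfar : ∀ A' ∈ E, Fintype.card ι < 40 * (symmDiff A' A).card := by
      intro A' hA'
      by_contra hlt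
      exact hcon A' hA' (symmDiff A' A) (by simp only [smallSets, mem_filter, mem_univ, true_and]; omega)
        (symmDiff_symmDiff_cancel_left _ _)
    have hnot : A ∉ E := by
      intro h
      have := hfar A h
      simp at this
    have : insert A E ∈ S := by
      simp only [S, mem_filter, mem_powerset]
      refine ⟨Finset.insert_subset hA hE'.1, ?_⟩
      intro X hX Y hY hne
      rw [mem_insert] at hX hY
      rcases hX with rfl | hX <;> rcases hY with rfl | hY
      · exact absurd rfl hne
      · rw [symmDiff_comm]; exact hfar Y hY
      · exact hfar X hX
      · exact hE'.2 X hX Y hY hne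
    have h2 := hmax _ this
    rw [card_insert_of_notMem hnot] at h2
    omega
  exact (card_le_card hcov).trans (card_biUnion_le_card_mul _ _ _ fun A _ => card_image_le)

/-- exponents of total degree at most `D`. -/
def expSet (τ : Type*) [Fintype τ] [DecidableEq τ] (D : ℕ) : Finset (τ → ℕ) :=
  (Fintype.piFinset fun _ => range (D + 1)).filter fun a => ∑ i, a i ≤ D

lemma expSet_card (τ : Type*) [Fintype τ] [DecidableEq τ] (D : ℕ) (x : ℝ) (hx0 : 0 < x)
    (hx1 : x < 1) :
    ((expSet τ D).card : ℝ) * x ^ D ≤ ((1 - x)⁻¹) ^ Fintype.card τ := by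
  calc ((expSet τ D).card : ℝ) * x ^ D = ∑ a ∈ expSet τ D, x ^ D := by simp
    _ ≤ ∑ a ∈ expSet τ D, ∏ i, x ^ a i := by
        apply sum_le_sum
        intro a ha
        rw [prod_pow_eq_pow_sum]
        simp only [expSet, mem_filter] at ha
        exact pow_le_pow_of_le_one hx0.le hx1.le ha.2
    _ ≤ ∑ a ∈ Fintype.piFinset fun _ : τ => range (D + 1), ∏ i, x ^ a i :=
        sum_le_sum_of_subset_of_nonneg (filter_subset _ _) (fun _ _ _ => by positivity)
    _ = ∏ i : τ, ∑ j ∈ range (D+1), x ^ j := (prod_univ_sum _ _).symm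
    _ ≤ ∏ i : τ, (1 - x)⁻¹ := by
        apply prod_le_prod
        · intro i _; positivity
        · intro i _
          have h := mul_neg_geom_sum x (D+1)
          have h1 : 0 < 1 - x := by linarith
          rw [← one_div, le_div_iff₀ h1, mul_comm, h]
          have := pow_pos hx0 (D+1)
          linarith
    _ = _ := by simp

lemma expSet_dim {τ : Type*} [Fintype τ] [DecidableEq τ] (D : ℕ) {κ : Type*} [Fintype κ]
    (g : κ → MvPolynomial τ ℝ) (hg : LinearIndependent ℝ g)
    (hdeg : ∀ k, (g k).totalDegree ≤ D) : Fintype.card κ ≤ (expSet τ D).card := by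
  classical
  let M : Finset (MvPolynomial τ ℝ) :=
    (expSet τ D).image fun a => MvPolynomial.monomial (Finsupp.equivFunOnFinite.symm a) 1
  have hsub : Set.range g ≤ Submodule.span ℝ (M : Set (MvPolynomial τ ℝ)) := by
    rintro _ ⟨k, rfl⟩
    rw [MvPolynomial.as_sum (g k)]
    refine Submodule.sum_mem _ fun v hv => ?_
    have : MvPolynomial.monomial v ((g k).coeff v)
      = (g k).coeff v • MvPolynomial.monomial v (1:ℝ) := by
      rw [MvPolynomial.smul_monomial]; simp
    rw [this]
    refine Submodule.smul_mem _ _ (Submodule.subset_span ?_)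
    have hv' : ∑ i, v i ≤ D := by
      have := (MvPolynomial.le_totalDegree hv).trans (hdeg k)
      rwa [Finsupp.sum_fintype _ _ (by simp)] at this
    simp only [M, coe_image, Set.mem_image, mem_coe]
    refine ⟨v, ?_, by simp⟩
    simp only [expSet, mem_filter, Fintype.mem_piFinset, mem_range]
    exact ⟨fun i => Nat.lt_succ_of_le ((single_le_sum (f := fun i => v i) (fun _ _ => Nat.zero_le _) (mem_univ i)).trans hv'), hv'⟩
  have h := linearIndependent_le_span_aux' g hg M hsub
  refine h.trans ?_
  simpa [M] using card_image_le

lemma indep_of_dominant {κ τ : Type*} [Fintype κ] [DecidableEq κ] (g : κ → MvPolynomial τ ℝ)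
    (z : κ → τ → ℝ) (a b : ℝ) (hb : 0 ≤ b) (hab : Fintype.card κ * b < a)
    (hdiag : ∀ k, a ≤ |MvPolynomial.eval (z k) (g k)|)
    (hoff : ∀ k l, k ≠ l → |MvPolynomial.eval (z k) (g l)| ≤ b) : LinearIndependent ℝ g := by
  rw [Fintype.linearIndependent_iff]
  intro c hc
  by_cases hne : Nonempty κ
  swap
  · intro i; exact absurd ⟨i⟩ hne
  obtain ⟨k, -, hk⟩ := Finset.univ.exists_max_image (fun k => |c k|) Finset.univ_nonempty
  have h0 : ∑ l, c l * MvPolynomial.eval (z k) (g l) = 0 := by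
    have := congrArg (MvPolynomial.eval (z k)) hc
    simpa [map_sum, MvPolynomial.smul_eval] using this
  rw [← Finset.add_sum_erase _ _ (mem_univ k)] at h0
  have h1 : |c k| * a ≤ |c k| * (Fintype.card κ * b) := by
    calc |c k| * a ≤ |c k| * |MvPolynomial.eval (z k) (g k)| := by gcongr; exact hdiag k
      _ = |∑ l ∈ univ.erase k, c l * MvPolynomial.eval (z k) (g l)| := by
          rw [← abs_mul, eq_neg_of_add_eq_zero_left h0, abs_neg]
      _ ≤ ∑ l ∈ univ.erase k, |c l * MvPolynomial.eval (z k) (g l)| := abs_sum_le_sum_abs _ _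
      _ ≤ ∑ l ∈ univ.erase k, |c k| * b := by
          apply sum_le_sum
          intro l hl
          rw [abs_mul]
          exact mul_le_mul (hk l (mem_univ l)) (hoff k l (ne_of_mem_erase hl).symm) (abs_nonneg _) (abs_nonneg _)
      _ ≤ ∑ l, |c k| * b := sum_le_sum_of_subset_of_nonneg (subset_univ _) (fun _ _ _ => by positivity)
      _ = _ := by simp; ring
  have h2 : |c k| = 0 := by
    by_contra hpos
    have : 0 < |c k| := lt_of_le_of_ne (abs_nonneg _) (Ne.symm hpos)
    nlinarith
  intro i
  have := hk i (mem_univ i)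
  rw [h2] at this
  exact abs_nonpos_iff.mp this

lemma sgnv_sq {ι : Type*} [DecidableEq ι] (A : Finset ι) (k : ι) : sgnv A k * sgnv A k = 1 := by
  unfold sgnv; split_ifs <;> norm_num

lemma sgnv_abs {ι : Type*} [DecidableEq ι] (A : Finset ι) (k : ι) : |sgnv A k| = 1 := by
  unfold sgnv; split_ifs <;> norm_num

lemma sgnv_mul_of_mem {ι : Type*} [DecidableEq ι] (A A' : Finset ι) (k : ι)
    (h : k ∈ symmDiff A A') : sgnv A k * sgnv A' k = -1 := by
  rw [Finset.mem_symmDiff] at h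
  unfold sgnv
  rcases h with h | h <;> simp [h.1, h.2]

lemma sgnv_mul_of_notMem {ι : Type*} [DecidableEq ι] (A A' : Finset ι) (k : ι)
    (h : k ∉ symmDiff A A') : sgnv A k * sgnv A' k = 1 := by
  rw [Finset.mem_symmDiff] at h
  unfold sgnv
  by_cases h1 : k ∈ A <;> by_cases h2 : k ∈ A' <;> simp_all

/-- The (tiny) tolerance. -/
noncomputable def sig : ℝ := (1/4) ^ 80

lemma sig_pos : 0 < sig := by unfold sig; positivity

lemma sig_le : sig ≤ 1/4 := by
  unfold sig
  calc (1/4:ℝ)^80 ≤ (1/4)^1 := pow_le_pow_of_le_one (by norm_num) (by norm_num) (by norm_num)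
    _ = 1/4 := by norm_num

/-- test polynomial -/
noncomputable def testPoly {ι τ : Type*} [DecidableEq ι] [Fintype ι] (P : ι → MvPolynomial τ ℝ)
    (B A : Finset ι) : MvPolynomial τ ℝ :=
  ∏ k ∈ Bᶜ, (MvPolynomial.C (1/2) + MvPolynomial.C (sgnv A k / 2) * P k)

lemma testPoly_deg {ι τ : Type*} [DecidableEq ι] [Fintype ι] (P : ι → MvPolynomial τ ℝ)
    (d : ℕ) (hP : ∀ k, (P k).totalDegree ≤ d) (B A : Finset ι) :
    (testPoly P B A).totalDegree ≤ d * Fintype.card ι := by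
  unfold testPoly
  refine (MvPolynomial.totalDegree_finsetProd _ _).trans ?_
  calc _ ≤ ∑ k ∈ Bᶜ, d := by
        apply sum_le_sum
        intro k _
        refine (MvPolynomial.totalDegree_add _ _).trans ?_
        refine max_le (by simp) ?_
        refine (MvPolynomial.totalDegree_mul _ _).trans ?_
        simpa using hP k
    _ ≤ ∑ k : ι, d := sum_le_sum_of_subset (subset_univ _)
    _ = _ := by simp [mul_comm]

lemma code_card_le {ι τ : Type*} [DecidableEq ι] [Fintype ι] [Fintype τ] [DecidableEq τ]
    (hN : 0 < Fintype.card ι)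
    (P : ι → MvPolynomial τ ℝ) (d : ℕ) (hP : ∀ k, (P k).totalDegree ≤ d)
    (E : Finset (Finset ι)) (B : Finset ι) (hB : 80 * B.card ≤ Fintype.card ι)
    (hE : ∀ A ∈ E, ∀ A' ∈ E, A ≠ A' → Fintype.card ι < 40 * (symmDiff A A').card)
    (z : Finset ι → τ → ℝ)
    (hz : ∀ A ∈ E, ∀ k, k ∉ B → |MvPolynomial.eval (z A) (P k) - sgnv A k| ≤ 2 * sig) :
    E.card ≤ (expSet τ (d * Fintype.card ι)).card := by
  set N := Fintype.card ι
  have hs := sig_pos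
  have hs4 := sig_le
  have hfac : ∀ A A' : Finset ι, MvPolynomial.eval (z A) (testPoly P B A')
      = ∏ k ∈ Bᶜ, (1 + sgnv A' k * MvPolynomial.eval (z A) (P k)) / 2 := by
    intro A A'
    simp only [testPoly, map_prod, map_add, map_mul, MvPolynomial.eval_C]
    exact prod_congr rfl fun k _ => by ring
  have hdiag : ∀ A ∈ E, (1 - sig) ^ N ≤ |MvPolynomial.eval (z A) (testPoly P B A)| := by
    intro A hA
    rw [hfac, abs_prod]
    calc (1 - sig) ^ N ≤ (1 - sig) ^ (Bᶜ).card :=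
          pow_le_pow_of_le_one (by linarith) (by linarith) (card_le_univ _)
      _ = ∏ k ∈ Bᶜ, (1 - sig) := by simp
      _ ≤ _ := by
        apply prod_le_prod
        · intro k _; linarith
        · intro k hk
          have h1 := abs_le.mp (hz A hA k (by simpa using hk))
          refine le_trans ?_ (le_abs_self _)
          unfold sgnv at *
          split_ifs at * <;> linarith
  have hoff : ∀ A ∈ E, ∀ A' ∈ E, A ≠ A' →
      |MvPolynomial.eval (z A) (testPoly P B A')| ≤ (1 + sig) ^ N * (1/4) ^ (N+1) := by
    intro A hA A' hA' hne
    rw [hfac, abs_prod]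
    set S := symmDiff A A' with hS
    have h1 : ∀ k ∈ Bᶜ, |(1 + sgnv A' k * MvPolynomial.eval (z A) (P k)) / 2|
        ≤ (1 + sig) * (if k ∈ S then sig else 1) := by
      intro k hk
      have h1 := abs_le.mp (hz A hA k (by simpa using hk))
      rw [abs_le]
      split_ifs with hkS
      · have h2 := sgnv_mul_of_mem A A' k hkS
        have h3 : sig ≤ (1 + sig) * sig := by nlinarith
        unfold sgnv at *
        constructor <;> (split_ifs at * <;> linarith)
      · have h2 := sgnv_mul_of_notMem A A' k hkS
        unfold sgnv at *
        constructor <;> (split_ifs at * <;> linarith)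
    have hcard : N < 80 * (Bᶜ ∩ S).card := by
      have h2 : N < 40 * S.card := hE A hA A' hA' hne
      have h3 : S.card ≤ (Bᶜ ∩ S).card + B.card := by
        calc S.card ≤ ((Bᶜ ∩ S) ∪ B).card := by
              apply card_le_card
              intro k hk
              by_cases hkB : k ∈ B <;> simp [hk, hkB]
          _ ≤ _ := card_union_le _ _
      omega
    calc _ ≤ ∏ k ∈ Bᶜ, ((1 + sig) * (if k ∈ S then sig else 1)) :=
          prod_le_prod (fun _ _ => abs_nonneg _) h1
      _ = (1 + sig) ^ (Bᶜ).card * sig ^ (Bᶜ ∩ S).card := by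
          rw [prod_mul_distrib, prod_const, prod_ite_mem, prod_const]
      _ ≤ (1 + sig) ^ N * (1/4) ^ (N+1) := by
          gcongr ?_ * ?_
          · exact pow_le_pow_right₀ (by linarith) (card_le_univ _)
          · unfold sig
            rw [← pow_mul]
            exact pow_le_pow_of_le_one (by norm_num) (by norm_num) hcard
  have hli : LinearIndependent ℝ (fun A : E => testPoly P B A.1) := by
    apply indep_of_dominant (fun A : E => testPoly P B A.1) (fun A : E => z A.1) ((1 - sig)^N)
      ((1 + sig) ^ N * (1/4) ^ (N+1)) (by positivity)
    · have h1 : (Fintype.card E : ℝ) ≤ 2 ^ N := by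
        have : E.card ≤ 2 ^ N := by
          simpa using card_le_univ E
        simpa using (by exact_mod_cast this : (E.card : ℝ) ≤ 2 ^ N)
      have h2 : (1 + sig)^N ≤ 2 ^ N * (1 - sig)^N := by
        rw [← mul_pow]
        gcongr
        linarith
      have h3 : (0:ℝ) < (1 - sig)^N := by
        have : 0 < 1 - sig := by linarith
        positivity
      calc (Fintype.card E : ℝ) * ((1 + sig) ^ N * (1/4) ^ (N+1))
          ≤ 2 ^ N * ((2 ^ N * (1 - sig)^N) * (1/4)^(N+1)) := by gcongr
        _ = (2 * 2 * (1/4)) ^ N * (1 - sig)^N * (1/4) := by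
            rw [mul_pow, mul_pow, pow_succ]; ring
        _ = (1 - sig)^N * (1/4) := by norm_num
        _ < _ := by linarith
    · intro A; exact hdiag A.1 A.2
    · intro A A' hne
      exact hoff A.1 A.2 A'.1 A'.2 (fun h => hne (Subtype.ext h))
  have := expSet_dim (d * N) _ hli (fun A => testPoly_deg P d hP B A.1)
  simpa using this

/-- Main combinatorial result. -/
lemma exists_far_sign {ι τ : Type*} [DecidableEq ι] [Fintype ι] [Fintype τ] [DecidableEq τ]
    (hN : 0 < Fintype.card ι)
    (P : ι → MvPolynomial τ ℝ) (d : ℕ) (hd : 0 < d) (hP : ∀ k, (P k).totalDegree ≤ d)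
    (hp : 8 * Fintype.card τ * (4 + d) ≤ Fintype.card ι) :
    ∃ A : Finset ι, ∀ z : τ → ℝ, Fintype.card ι < 80 *
      (univ.filter fun k => 2 * sig < |MvPolynomial.eval z (P k) - sgnv A k|).card := by
  classical
  by_contra hcon
  push Not at hcon
  choose z hz using hcon
  set N := Fintype.card ι with hNdef
  set bad : Finset ι → Finset ι := fun A =>
    univ.filter fun k => 2 * sig < |MvPolynomial.eval (z A) (P k) - sgnv A k| with hbad
  set V := (smallSets ι).card
  set W := (expSet τ (d * N)).card
  have hmaps : ∀ A ∈ (univ : Finset (Finset ι)), bad A ∈ smallSets ι := by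
    intro A _
    have := hz A
    simp only [smallSets, mem_filter, mem_univ, true_and]
    change 80 * (bad A).card ≤ N at this
    omega
  have hfib : ∀ B ∈ smallSets ι, ((univ : Finset (Finset ι)).filter fun A => bad A = B).card
      ≤ W * V := by
    intro B _
    obtain ⟨E, hEF, hsep, hcard⟩ := greedy_code ((univ : Finset (Finset ι)).filter fun A => bad A = B)
    refine hcard.trans (Nat.mul_le_mul_right _ ?_)
    rcases E.eq_empty_or_nonempty with rfl | ⟨A0, hA0⟩
    · simp
    have hb : ∀ A ∈ E, bad A = B := fun A hA => (mem_filter.mp (hEF hA)).2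
    refine code_card_le hN P d hP E B ?_ hsep z ?_
    · rw [← hb A0 hA0]; exact hz A0
    · intro A hA k hk
      rw [← hb A hA] at hk
      simpa [hbad] using hk
  have htot : 2 ^ N ≤ (W * V) * V := by
    have := card_le_mul_card_image_of_maps_to hmaps (W * V) hfib
    simpa using this
  have hV : (V:ℝ)^4 ≤ 2 ^ N := smallSets_card ι
  have hW : (W:ℝ)^8 ≤ 4 ^ N := by
    set x : ℝ := 1 - 1 / (16 * d) with hx
    have hd1 : (1:ℝ) ≤ d := by exact_mod_cast hd
    have hfr : 1 / (16 * (d:ℝ)) ≤ 1/16 := by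
      apply one_div_le_one_div_of_le <;> linarith
    have hfr0 : 0 < 1 / (16 * (d:ℝ)) := by positivity
    have h1 := expSet_card τ (d * N) x (by linarith) (by linarith)
    have h2 : (1 - x)⁻¹ = 16 * d := by rw [hx]; simp
    have hxd : (15/16 : ℝ) ≤ x ^ d := by
      have := one_add_mul_le_pow (a := -(1 / (16 * (d:ℝ)))) (by linarith) d
      have h3 : (d:ℝ) * -(1 / (16 * (d:ℝ))) = -1/16 := by field_simp
      rw [h3] at this
      calc (15/16 : ℝ) = 1 + -1/16 := by norm_num
        _ ≤ _ := this
        _ = x ^ d := by rw [hx, sub_eq_add_neg]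
    have h3 : (W:ℝ) * (15/16)^N ≤ (2 ^ (4 + d)) ^ Fintype.card τ := by
      calc (W:ℝ) * (15/16)^N ≤ W * (x ^ d)^N := by gcongr
        _ = W * x ^ (d * N) := by rw [pow_mul]
        _ ≤ _ := h1
        _ ≤ _ := by
          rw [h2, pow_add]
          have : (d:ℝ) ≤ 2 ^ d := by exact_mod_cast Nat.lt_two_pow_self.le
          gcongr
          norm_num
    have h4 : ((W:ℝ) * (15/16)^N)^8 ≤ 2 ^ N := by
      calc _ ≤ (((2:ℝ) ^ (4 + d)) ^ Fintype.card τ)^8 := by gcongr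
        _ = 2 ^ (8 * Fintype.card τ * (4 + d)) := by
            rw [← pow_mul, ← pow_mul]; congr 1; ring
        _ ≤ 2 ^ N := pow_le_pow_right₀ (by norm_num) hp
    have h5 : (1:ℝ) ≤ 2 ^ N * ((15/16)^N)^8 := by
      rw [← pow_mul, mul_comm N 8, pow_mul, ← mul_pow]
      exact one_le_pow₀ (by norm_num)
    calc (W:ℝ)^8 ≤ W^8 * (2 ^ N * ((15/16)^N)^8) := le_mul_of_one_le_right (by positivity) h5
      _ = 2 ^ N * ((W:ℝ) * (15/16)^N)^8 := by ring
      _ ≤ 2 ^ N * 2 ^ N := by gcongr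
      _ = 4 ^ N := by rw [← mul_pow]; norm_num
  have htot' : (2:ℝ) ^ N ≤ (W * V) * V := by exact_mod_cast htot
  have h8 : ((2:ℝ) ^ N)^8 ≤ ((2:ℝ)^N)^6 := by
    calc ((2:ℝ) ^ N)^8 ≤ ((W * V) * V : ℝ)^8 := by gcongr
      _ = (W:ℝ)^8 * ((V:ℝ)^4)^4 := by ring
      _ ≤ 4 ^ N * ((2:ℝ)^N)^4 := by gcongr
      _ = ((2:ℝ)^N)^6 := by
        have : (4:ℝ)^N = (2^N)^2 := by rw [← pow_mul, mul_comm N 2, pow_mul]; norm_num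
        rw [this]; ring
  have h9 : ((2:ℝ)^N)^6 < ((2:ℝ)^N)^8 :=
    pow_lt_pow_right₀ (one_lt_pow₀ (by norm_num) (by omega)) (by norm_num)
  linarith

noncomputable def fej (M : ℕ) (x : ℝ) : ℝ :=
  (1 / (M:ℝ)^2) * ∑ a ∈ range M, ∑ b ∈ range M, Real.cos (((a:ℝ) - b) * x)

noncomputable def pt (M : ℕ) (i : ℕ) : ℝ := -Real.pi + 2 * Real.pi * i / M

noncomputable def fw (M : ℕ) (l : ℤ) : ℝ :=
  (1 / (M:ℝ)^2) * (((range M ×ˢ range M).filter fun q => (q.1 : ℤ) - q.2 = l).card : ℝ)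

lemma fej_nonneg (M : ℕ) (x : ℝ) : 0 ≤ fej M x := by
  unfold fej
  have : ∑ a ∈ range M, ∑ b ∈ range M, Real.cos (((a:ℝ) - b) * x)
      = (∑ a ∈ range M, Real.cos (a * x))^2 + (∑ a ∈ range M, Real.sin (a * x))^2 := by
    rw [sq, sq, sum_mul_sum, sum_mul_sum, ← sum_add_distrib]
    refine sum_congr rfl fun a _ => ?_
    rw [← sum_add_distrib]
    refine sum_congr rfl fun b _ => ?_
    rw [sub_mul, Real.cos_sub]
  rw [this]
  positivity

lemma fej_continuous (M : ℕ) : Continuous (fej M) := by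
  unfold fej
  fun_prop

lemma fej_lower (M : ℕ) (hM : 0 < M) (x : ℝ) : 1 - ((M:ℝ) * x)^2 / 2 ≤ fej M x := by
  unfold fej
  have hM' : (0:ℝ) < M := by exact_mod_cast hM
  have h : ∑ a ∈ range M, ∑ b ∈ range M, (1 - ((M:ℝ) * x)^2 / 2)
      ≤ ∑ a ∈ range M, ∑ b ∈ range M, Real.cos (((a:ℝ) - b) * x) := by
    refine sum_le_sum fun a ha => sum_le_sum fun b hb => ?_
    refine le_trans ?_ Real.one_sub_sq_div_two_le_cos
    have ha' : (a:ℝ) < M := by exact_mod_cast mem_range.mp ha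
    have hb' : (b:ℝ) < M := by exact_mod_cast mem_range.mp hb
    have ha0 : (0:ℝ) ≤ a := by positivity
    have hb0 : (0:ℝ) ≤ b := by positivity
    have : ((a:ℝ) - b)^2 ≤ (M:ℝ)^2 := by
      apply sq_le_sq'
      · linarith
      · linarith
    have h2 := mul_le_mul_of_nonneg_right this (sq_nonneg x)
    rw [mul_pow, mul_pow]
    linarith
  simp only [sum_const, card_range, nsmul_eq_mul] at h
  rw [one_div, inv_mul_eq_div, le_div_iff₀ (by positivity)]
  linarith

lemma sum_cos_zero (M : ℕ) (a b : ℕ) (ha : a < M) (hb : b < M) (hab : a ≠ b) (x : ℝ) :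
    ∑ i : Fin M, Real.cos (((a:ℝ) - b) * (x - pt M i)) = 0 := by
  have hM : 0 < M := by omega
  have hMC : (M:ℂ) ≠ 0 := by exact_mod_cast hM.ne'
  set ζ : ℂ := Complex.exp (-(2 * Real.pi * Complex.I * ((a:ℂ) - b) / M)) with hζ
  have hζM : ζ ^ M = 1 := by
    rw [hζ, ← Complex.exp_nat_mul, Complex.exp_eq_one_iff]
    refine ⟨(b:ℤ) - a, ?_⟩
    push_cast
    field_simp
    ring
  have hζ1 : ζ ≠ 1 := by
    intro h
    rw [hζ, Complex.exp_eq_one_iff] at h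
    obtain ⟨n, hn⟩ := h
    have hpi : (2 * Real.pi * Complex.I : ℂ) ≠ 0 := Complex.two_pi_I_ne_zero
    have h1 : -((a:ℂ) - b) = n * M := by
      have : -((a:ℂ) - b) / M = n := by
        apply mul_right_cancel₀ hpi
        rw [← hn]; ring
      rw [← this]; field_simp
    have h2 : -((a:ℤ) - b) = n * M := by exact_mod_cast h1
    rcases lt_trichotomy n 0 with hn0 | hn0 | hn0
    · have : n * (M:ℤ) ≤ -1 * M := by
        apply mul_le_mul_of_nonneg_right <;> omega
      omega
    · subst hn0; omega
    · have : 1 * (M:ℤ) ≤ n * M := by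
        apply mul_le_mul_of_nonneg_right <;> omega
      omega
  have hgeom : ∑ i ∈ range M, ζ ^ i = 0 := by
    have := mul_neg_geom_sum ζ M
    rw [hζM, sub_self] at this
    exact (mul_eq_zero.mp this).resolve_left (sub_ne_zero.mpr hζ1.symm)
  have hre : ∀ i : ℕ, Real.cos (((a:ℝ) - b) * (x - pt M i))
      = (Complex.exp (((a:ℂ) - b) * (x + Real.pi) * Complex.I) * ζ ^ i).re := by
    intro i
    rw [hζ, ← Complex.exp_nat_mul, ← Complex.exp_add]
    have : ((a:ℂ) - b) * (x + Real.pi) * Complex.I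
        + i * -(2 * Real.pi * Complex.I * ((a:ℂ) - b) / M)
        = ((((a:ℝ) - b) * (x - pt M i) : ℝ) : ℂ) * Complex.I := by
      unfold pt
      push_cast
      ring
    rw [this, Complex.exp_ofReal_mul_I_re]
  rw [Fin.sum_univ_eq_sum_range (fun i => Real.cos (((a:ℝ) - b) * (x - pt M i))) M]
  simp_rw [hre]
  rw [← Complex.re_sum, ← mul_sum, hgeom]
  simp

lemma fej_sum (M : ℕ) (hM : 0 < M) (x : ℝ) : ∑ i : Fin M, fej M (x - pt M i) = 1 := by
  unfold fej
  have hM' : (0:ℝ) < M := by exact_mod_cast hM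
  rw [← mul_sum, sum_comm]
  have : ∑ a ∈ range M, ∑ i : Fin M, ∑ b ∈ range M, Real.cos (((a:ℝ) - b) * (x - pt M i))
      = ∑ a ∈ range M, (M:ℝ) := by
    refine sum_congr rfl fun a ha => ?_
    rw [sum_comm, sum_eq_single a]
    · simp
    · intro b hb hne
      exact sum_cos_zero M a b (mem_range.mp ha) (mem_range.mp hb) hne.symm x
    · intro h; exact absurd ha h
  rw [this]
  simp
  field_simp

lemma fw_neg (M : ℕ) (l : ℤ) : fw M (-l) = fw M l := by
  unfold fw
  congr 2
  refine card_nbij' Prod.swap Prod.swap ?_ ?_ ?_ ?_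
  · intro q hq
    simp at hq ⊢
    omega
  · intro q hq
    simp at hq ⊢
    omega
  · intro q _; simp
  · intro q _; simp

lemma fej_expand (M : ℕ) (x : ℝ) : (fej M x : ℂ) =
    ∑ l ∈ Icc (-(M:ℤ)) M, (fw M l : ℂ) * Complex.exp (Complex.I * (l * x)) := by
  have h1 : ∑ l ∈ Icc (-(M:ℤ)) M, (fw M l : ℂ) * Complex.exp (Complex.I * (l * x))
      = (1 / (M:ℂ)^2) * ∑ q ∈ range M ×ˢ range M,
          Complex.exp (Complex.I * (((q.1:ℂ) - q.2) * x)) := by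
    rw [← sum_fiberwise_of_maps_to (s := range M ×ˢ range M) (t := Icc (-(M:ℤ)) M)
      (g := fun q => (q.1:ℤ) - q.2), mul_sum]
    · refine sum_congr rfl fun l _ => ?_
      have : ∑ q ∈ (range M ×ˢ range M) with (q.1:ℤ) - q.2 = l,
          Complex.exp (Complex.I * (((q.1:ℂ) - q.2) * x))
          = ∑ q ∈ (range M ×ˢ range M) with (q.1:ℤ) - q.2 = l,
            Complex.exp (Complex.I * (l * x)) := by
        refine sum_congr rfl fun q hq => ?_
        rw [← (mem_filter.mp hq).2]
        push_cast
        rfl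
      rw [this, sum_const, nsmul_eq_mul]
      unfold fw
      push_cast
      ring
    · intro q hq
      simp at hq ⊢
      omega
  rw [h1, sum_product]
  unfold fej
  push_cast
  congr 1
  have h2 : ∀ a b : ℕ, Complex.cos (((a:ℂ) - b) * x)
      = (Complex.exp (Complex.I * (((a:ℂ) - b) * x)) + Complex.exp (Complex.I * (((b:ℂ) - a) * x))) / 2 := by
    intro a b
    rw [Complex.cos]
    congr 3 <;> ring
  simp_rw [h2, ← sum_div, sum_add_distrib]
  rw [sum_comm (f := fun a b : ℕ => Complex.exp (Complex.I * (((b:ℂ) - a) * x)))]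
  ring

noncomputable def trigF {d : ℕ} (n : Fin d → ℕ) (A : Finset (∀ j, Fin (n j))) (x : Fin d → ℝ) : ℝ :=
  ∑ κ : (∀ j, Fin (n j)), sgnv A κ * ∏ j, fej (n j) (x j - pt (n j) (κ j))

lemma trigF_part {d : ℕ} (n : Fin d → ℕ) (hn : ∀ j, 0 < n j) (x : Fin d → ℝ) :
    ∑ κ : (∀ j, Fin (n j)), ∏ j, fej (n j) (x j - pt (n j) (κ j)) = 1 := by
  have := (prod_univ_sum (fun j => (univ : Finset (Fin (n j))))
    (fun j i => fej (n j) (x j - pt (n j) i))).symm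
  rw [Fintype.piFinset_univ] at this
  rw [this]
  exact prod_eq_one fun j _ => fej_sum (n j) (hn j) (x j)

lemma trigF_bound {d : ℕ} (n : Fin d → ℕ) (hn : ∀ j, 0 < n j) (A : Finset (∀ j, Fin (n j)))
    (x : Fin d → ℝ) : |trigF n A x| ≤ 1 := by
  rw [← trigF_part n hn x]
  refine (abs_sum_le_sum_abs _ _).trans (sum_le_sum fun κ _ => ?_)
  rw [abs_mul, sgnv_abs, one_mul, abs_of_nonneg (prod_nonneg fun j _ => fej_nonneg _ _)]

lemma trigF_continuous {d : ℕ} (n : Fin d → ℕ) (A : Finset (∀ j, Fin (n j))) :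
    Continuous (trigF n A) := by
  unfold trigF
  refine continuous_finsetSum _ fun κ _ => continuous_const.mul ?_
  refine continuous_finsetProd _ fun j _ => (fej_continuous _).comp ?_
  fun_prop

lemma trigF_near {d : ℕ} (n : Fin d → ℕ) (hn : ∀ j, 0 < n j) (A : Finset (∀ j, Fin (n j)))
    (κ : ∀ j, Fin (n j)) (y : Fin d → ℝ)
    (hy : ∀ j, y j ∈ Set.Icc 0 (sig / (d + 1) / n j)) :
    |trigF n A (fun j => pt (n j) (κ j) + y j) - sgnv A κ| ≤ sig := by
  set x : Fin d → ℝ := fun j => pt (n j) (κ j) + y j with hx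
  have hs := sig_pos
  have hs4 := sig_le
  set p : (∀ j, Fin (n j)) → ℝ := fun κ' => ∏ j, fej (n j) (x j - pt (n j) (κ' j)) with hp
  have hp0 : ∀ κ', 0 ≤ p κ' := fun κ' => prod_nonneg fun j _ => fej_nonneg _ _
  have hsum : ∑ κ', p κ' = 1 := trigF_part n hn x
  have h1 : trigF n A x - sgnv A κ = ∑ κ', (sgnv A κ' - sgnv A κ) * p κ' := by
    simp only [sub_mul, sum_sub_distrib, ← mul_sum, hsum, mul_one]
    rfl
  have h2 : |trigF n A x - sgnv A κ| ≤ 2 * (1 - p κ) := by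
    rw [h1, ← add_sum_erase _ _ (mem_univ κ), sub_self, zero_mul, zero_add]
    calc _ ≤ ∑ κ' ∈ univ.erase κ, |(sgnv A κ' - sgnv A κ) * p κ'| := abs_sum_le_sum_abs _ _
      _ ≤ ∑ κ' ∈ univ.erase κ, 2 * p κ' := by
          refine sum_le_sum fun κ' _ => ?_
          rw [abs_mul, abs_of_nonneg (hp0 κ')]
          refine mul_le_mul_of_nonneg_right ?_ (hp0 κ')
          refine (abs_sub _ _).trans ?_
          rw [sgnv_abs, sgnv_abs]; norm_num
      _ = 2 * (1 - p κ) := by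
          rw [← mul_sum, ← hsum, ← add_sum_erase _ p (mem_univ κ)]; ring
  have hd0 : (0:ℝ) ≤ d := by positivity
  have hq0 : 0 ≤ sig / (d+1) := by positivity
  have hq : sig / (d+1) ≤ sig := div_le_self hs.le (by linarith)
  have h3 : ∀ j, 1 - (sig/(d+1)) / 2 ≤ fej (n j) (x j - pt (n j) (κ j)) := by
    intro j
    have hnj : (0:ℝ) < n j := by exact_mod_cast hn j
    have : x j - pt (n j) (κ j) = y j := by simp [hx]
    rw [this]
    refine le_trans ?_ (fej_lower (n j) (hn j) (y j))
    have hy1 : (n j : ℝ) * y j ≤ sig / (d+1) := by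
      have := (hy j).2
      rw [le_div_iff₀ hnj] at this
      linarith
    have hy0 : 0 ≤ (n j : ℝ) * y j := mul_nonneg hnj.le (hy j).1
    nlinarith
  have h4 : 1 - sig / 2 ≤ p κ := by
    calc 1 - sig/2 ≤ 1 + d * (-((sig/(d+1)) / 2)) := by
          have : d * (sig/(d+1)) ≤ sig := by
            rw [← mul_div_assoc, div_le_iff₀ (by linarith)]
            nlinarith
          linarith
      _ ≤ (1 + -((sig/(d+1)) / 2)) ^ d := one_add_mul_le_pow (by linarith) d
      _ = ∏ j : Fin d, (1 - (sig/(d+1)) / 2) := by simp [sub_eq_add_neg]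
      _ ≤ p κ := prod_le_prod (fun j _ => by linarith) (fun j _ => h3 j)
  linarith

lemma trigF_mem {d : ℕ} (n : Fin d → ℕ) (hn : ∀ j, 0 < n j) (A : Finset (∀ j, Fin (n j))) :
    trigF n A ∈ TrigClass d n := by
  refine ⟨⟨fun k => ∑ κ : (∀ j, Fin (n j)), (sgnv A κ : ℂ) *
    ∏ j, ((fw (n j) (k j) : ℂ) * Complex.exp (-(Complex.I * (k j * (pt (n j) (κ j) : ℝ))))), ?_, ?_⟩,
    fun x _ => trigF_bound n hn A x⟩
  · intro k
    simp only [map_sum, map_mul, map_prod, Complex.conj_ofReal, ← Complex.exp_conj, map_neg,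
      Complex.conj_I, map_intCast, Pi.neg_apply, fw_neg]
    refine sum_congr rfl fun κ _ => ?_
    congr 1
    refine prod_congr rfl fun j _ => ?_
    congr 2
    push_cast
    ring
  · intro x
    have hbox : trigBox d n = Fintype.piFinset fun j => Icc (-(n j : ℤ)) (n j) := by
      ext k
      simp [trigBox, Fintype.mem_piFinset, Pi.le_def, forall_and]
    unfold trigF
    push_cast
    simp_rw [sum_mul]
    rw [sum_comm]
    refine sum_congr rfl fun κ _ => ?_
    simp_rw [mul_assoc]
    rw [← mul_sum]
    congr 1
    simp_rw [fej_expand]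
    rw [prod_univ_sum, hbox]
    refine sum_congr rfl fun k _ => ?_
    rw [mul_sum, Complex.exp_sum, ← prod_mul_distrib]
    refine prod_congr rfl fun j _ => ?_
    rw [mul_assoc, ← Complex.exp_add]
    congr 2
    push_cast
    ring

abbrev bigCube (d : ℕ) : Set (Fin d → ℝ) := Set.univ.pi fun _ => Set.Icc (-Real.pi) Real.pi

lemma bigCube_eq (d : ℕ) : bigCube d = Set.Icc (fun _ => -Real.pi) (fun _ => Real.pi) := by
  ext x; simp [bigCube, Set.mem_pi, Pi.le_def, forall_and]

lemma pt_lower (M i : ℕ) : -Real.pi ≤ pt M i := by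
  unfold pt
  have : 0 ≤ 2 * Real.pi * i / M := by have := Real.pi_pos; positivity
  linarith

lemma pt_step (M : ℕ) (hM : 0 < M) (i i' : ℕ) (h : i < i') (δ : ℝ) (hδ : δ < 1) :
    pt M i + δ / M < pt M i' := by
  unfold pt
  have hM' : (0:ℝ) < M := by exact_mod_cast hM
  have h' : (i:ℝ) + 1 ≤ i' := by exact_mod_cast h
  have hpi := Real.pi_gt_three
  rw [add_assoc, ← add_div]
  gcongr
  nlinarith

lemma pt_upper (M : ℕ) (hM : 0 < M) (i : ℕ) (h : i < M) (δ : ℝ) (hδ : δ < 1) :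
    pt M i + δ / M ≤ Real.pi := by
  have h1 := pt_step M hM i M h δ hδ
  have hM' : (M:ℝ) ≠ 0 := by exact_mod_cast hM.ne'
  have : pt M M = Real.pi := by
    unfold pt; field_simp; ring
  linarith

lemma integral_grid {d : ℕ} (n : Fin d → ℕ) (hn : ∀ j, 0 < n j) (δ : ℝ) (hδ0 : 0 < δ) (hδ : δ < 1)
    (h : (Fin d → ℝ) → ℝ) (h0 : ∀ x, 0 ≤ h x) (hint : IntegrableOn h (bigCube d)) (c : ℝ)
    (hc : ∀ y : Fin d → ℝ, (∀ j, y j ∈ Set.Icc 0 (δ / n j)) →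
      c ≤ ∑ κ : (∀ j, Fin (n j)), h (fun j => pt (n j) (κ j) + y j)) :
    c * ∏ j, (δ / n j) ≤ ∫ x in bigCube d, h x := by
  set q : Fin d → ℝ := fun j => δ / n j with hq
  have hq0 : 0 ≤ q := fun j => by
    have : (0:ℝ) < n j := by exact_mod_cast hn j
    simp only [hq, Pi.zero_apply]; positivity
  set p : (∀ j, Fin (n j)) → Fin d → ℝ := fun κ j => pt (n j) (κ j) with hp
  set s : (∀ j, Fin (n j)) → Set (Fin d → ℝ) := fun κ => Set.Icc (p κ) (p κ + q) with hs
  have hsm : ∀ κ, MeasurableSet (s κ) := fun κ => measurableSet_Icc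
  have hsub : ∀ κ, s κ ⊆ bigCube d := by
    intro κ
    rw [bigCube_eq]
    refine Set.Icc_subset_Icc ?_ ?_
    · intro j; exact pt_lower _ _
    · intro j; exact pt_upper (n j) (hn j) _ (κ j).2 δ hδ
  have hdis : Pairwise (Function.onFun Disjoint s) := by
    intro κ κ' hne
    rw [Function.onFun, Set.disjoint_left]
    intro x hx hx'
    obtain ⟨j, hj⟩ := Function.ne_iff.mp hne
    have h1 := hx.1 j
    have h2 := hx.2 j
    have h3 := hx'.1 j
    have h4 := hx'.2 j
    simp only [Pi.add_apply, hp, hq] at h1 h2 h3 h4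
    rcases lt_or_gt_of_ne (fun h => hj (Fin.ext h)) with hlt | hlt
    · have := pt_step (n j) (hn j) _ _ hlt δ hδ
      linarith
    · have := pt_step (n j) (hn j) _ _ hlt δ hδ
      linarith
  have hpre : ∀ κ, (fun y => p κ + y) ⁻¹' (s κ) = Set.Icc 0 q := by
    intro κ
    ext y
    simp [hs]
  have hmp : ∀ κ, MeasurePreserving (fun y : Fin d → ℝ => p κ + y) volume volume :=
    fun κ => measurePreserving_add_left volume (p κ)
  have hemb : ∀ κ, MeasurableEmbedding (fun y : Fin d → ℝ => p κ + y) :=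
    fun κ => measurableEmbedding_addLeft (p κ)
  have htr : ∀ κ, ∫ y in Set.Icc 0 q, h (p κ + y) = ∫ x in s κ, h x := by
    intro κ
    rw [← hpre κ]
    exact (hmp κ).setIntegral_preimage_emb (hemb κ) h (s κ)
  have hti : ∀ κ, IntegrableOn (fun y => h (p κ + y)) (Set.Icc 0 q) := by
    intro κ
    rw [← hpre κ]
    exact ((hmp κ).integrableOn_comp_preimage (hemb κ)).mpr (hint.mono_set (hsub κ))
  calc c * ∏ j, (δ / n j) = ∫ y in Set.Icc 0 q, c := by
        rw [setIntegral_const, smul_eq_mul, mul_comm, Measure.real, Real.volume_Icc_pi_toReal hq0]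
        simp [hq]
    _ ≤ ∫ y in Set.Icc 0 q, ∑ κ, h (p κ + y) := by
        refine setIntegral_mono_on ?_ (integrable_finsetSum _ fun κ _ => hti κ) measurableSet_Icc ?_
        · exact integrableOn_const (isCompact_Icc.measure_lt_top.ne)
        · intro y hy
          exact hc y fun j => ⟨hy.1 j, hy.2 j⟩
    _ = ∑ κ, ∫ y in Set.Icc 0 q, h (p κ + y) := integral_finsetSum _ fun κ _ => hti κ
    _ = ∑ κ, ∫ x in s κ, h x := sum_congr rfl fun κ _ => htr κ
    _ = ∫ x in ⋃ κ, s κ, h x := (integral_iUnion_fintype hsm hdis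
          fun κ => hint.mono_set (hsub κ)).symm
    _ ≤ ∫ x in bigCube d, h x := by
        refine setIntegral_mono_set hint (Filter.Eventually.of_forall fun x => h0 x) ?_
        exact (Set.iUnion_subset hsub).eventuallyLE

noncomputable def tensPoly {d : ℕ} (n : Fin d → ℕ) (m : ℕ) (κ : ∀ j, Fin (n j)) :
    MvPolynomial (Fin m × (Σ j, Fin (n j))) ℝ :=
  ∑ s, ∏ j, MvPolynomial.X (s, ⟨j, κ j⟩)

lemma tensPoly_deg {d : ℕ} (n : Fin d → ℕ) (m : ℕ) (κ : ∀ j, Fin (n j)) :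
    (tensPoly n m κ).totalDegree ≤ d := by
  unfold tensPoly
  refine MvPolynomial.totalDegree_finsetSum_le fun s _ => ?_
  refine (MvPolynomial.totalDegree_finsetProd _ _).trans ?_
  simp

lemma exists_bad {d : ℕ} (hd : 0 < d) (n : Fin d → ℕ) (hn : ∀ j, 0 < n j) (m : ℕ)
    (hm : 8 * (m * ∑ j, n j) * (4 + d) ≤ ∏ j, n j) :
    ∃ t ∈ TrigClass d n, ∀ u : Fin m → Fin d → ℝ → ℝ,
      Integrable (fun x : Fin d → ℝ => ∑ s, ∏ i, u s i (x i)) (volume.restrict (bigCube d)) →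
      sig / 80 * (sig / (d + 1)) ^ d ≤ ∫ x in bigCube d, |t x - ∑ s, ∏ i, u s i (x i)| := by
  have hs := sig_pos
  have hs4 := sig_le
  have hd0 : (0:ℝ) ≤ d := by positivity
  have hcard : Fintype.card (∀ j, Fin (n j)) = ∏ j, n j := by simp
  have hprod : 0 < ∏ j, n j := prod_pos fun j _ => hn j
  obtain ⟨A, hA⟩ := exists_far_sign (by rw [hcard]; exact hprod) (tensPoly n m) d hd
    (tensPoly_deg n m) (by rw [hcard]; simpa using hm)
  rw [hcard] at hA
  refine ⟨trigF n A, trigF_mem n hn A, fun u hu => ?_⟩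
  set g : (Fin d → ℝ) → ℝ := fun x => ∑ s, ∏ i, u s i (x i) with hg
  have hK : IsCompact (bigCube d) := isCompact_univ_pi fun _ => isCompact_Icc
  have hint : IntegrableOn (fun x => |trigF n A x - g x|) (bigCube d) :=
    (((trigF_continuous n A).continuousOn.integrableOn_compact hK).sub hu).abs
  have hδ0 : 0 < sig / (d + 1) := by positivity
  have hδ1 : sig / (d + 1) < 1 := by
    have := div_le_self hs.le (by linarith : (1:ℝ) ≤ d + 1)
    linarith
  have key := integral_grid n hn (sig / (d+1)) hδ0 hδ1 (fun x => |trigF n A x - g x|)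
    (fun _ => abs_nonneg _) hint (sig * ((∏ j, n j : ℕ) : ℝ) / 80) ?_
  · have h1 : ((∏ j, n j : ℕ) : ℝ) ≠ 0 := by exact_mod_cast hprod.ne'
    refine le_trans (le_of_eq ?_) key
    rw [prod_div_distrib, prod_const, card_univ, Fintype.card_fin, ← Nat.cast_prod]
    field_simp
  · intro y hy
    have h1 := hA (fun v => u v.1 v.2.1 (pt (n v.2.1) v.2.2 + y v.2.1))
    have hev : ∀ κ : (∀ j, Fin (n j)),
        MvPolynomial.eval (fun v : Fin m × (Σ j, Fin (n j)) =>
          u v.1 v.2.1 (pt (n v.2.1) v.2.2 + y v.2.1)) (tensPoly n m κ)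
        = g (fun j => pt (n j) (κ j) + y j) := by
      intro κ
      simp [tensPoly, hg]
    simp only [hev] at h1
    set Bd := univ.filter fun κ : (∀ j, Fin (n j)) =>
      2 * sig < |g (fun j => pt (n j) (κ j) + y j) - sgnv A κ| with hBd
    have h2 : ((∏ j, n j : ℕ) : ℝ) ≤ 80 * Bd.card := by exact_mod_cast h1.le
    calc sig * ((∏ j, n j : ℕ) : ℝ) / 80 ≤ Bd.card * sig := by nlinarith
      _ = ∑ κ ∈ Bd, sig := by simp
      _ ≤ ∑ κ ∈ Bd, |trigF n A (fun j => pt (n j) (κ j) + y j)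
            - g (fun j => pt (n j) (κ j) + y j)| := by
          refine sum_le_sum fun κ hκ => ?_
          have h3 := (mem_filter.mp hκ).2
          have h4 := trigF_near n hn A κ y hy
          have h5 := abs_sub_le (g (fun j => pt (n j) (κ j) + y j))
            (trigF n A (fun j => pt (n j) (κ j) + y j)) (sgnv A κ)
          rw [abs_sub_comm (g _) (trigF n A _)] at h5
          linarith
      _ ≤ _ := sum_le_sum_of_subset_of_nonneg (subset_univ _) fun _ _ _ => abs_nonneg _

lemma one_mem_trig (d : ℕ) (n : Fin d → ℕ) : (fun _ => (1:ℝ)) ∈ TrigClass d n := by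
  refine ⟨⟨fun k => if k = 0 then 1 else 0, ?_, ?_⟩, ?_⟩
  · intro k
    by_cases hk : k = 0 <;> simp [hk]
  · intro x
    simp only [ite_mul, one_mul, zero_mul]
    rw [sum_ite_eq', if_pos]
    · simp
    · simp [trigBox, Pi.le_def]
  · intro x _; simp

lemma bigCube_vol (d : ℕ) : volume.real (bigCube d) = (2 * Real.pi) ^ d := by
  rw [bigCube_eq, Measure.real, Real.volume_Icc_pi_toReal]
  · simp [two_mul]
  · intro j; have := Real.pi_pos; simp; linarith

lemma theta_bdd (d m : ℕ) (hdm : d ≠ 0 ∨ m = 0) (n : Fin d → ℕ) (t : (Fin d → ℝ) → ℝ)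
    (ht : t ∈ TrigClass d n) :
    theta1 d m (volume.restrict (bigCube d)) t ≤ (2 * Real.pi) ^ d := by
  have hz : ∀ x : Fin d → ℝ, ∑ s : Fin m, ∏ i : Fin d, (fun _ _ _ => 0 : Fin m → Fin d → ℝ → ℝ) s i (x i) = 0 := by
    intro x
    rcases hdm with h | h
    · simp [h]
    · subst h; simp
  have h1 : theta1 d m (volume.restrict (bigCube d)) t ≤ ∫ x in bigCube d, |t x| := by
    unfold theta1
    refine csInf_le ⟨0, ?_⟩ ?_
    · rintro r ⟨u, -, -, rfl⟩
      exact integral_nonneg fun _ => abs_nonneg _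
    · refine ⟨fun _ _ _ => 0, fun _ _ => measurable_const, ?_, ?_⟩
      · rw [funext hz]; exact integrable_zero _ _ _
      · refine integral_congr_ae (Filter.Eventually.of_forall fun x => ?_)
        have := hz x
        beta_reduce at this ⊢
        rw [this, sub_zero]
  have hK : IsCompact (bigCube d) := isCompact_univ_pi fun _ => isCompact_Icc
  have h2 := norm_setIntegral_le_of_norm_le_const (μ := volume) (f := fun x => |t x|) (C := 1)
    hK.measure_lt_top (fun x hx => by
      have := ht.2 x (fun j => hx j (Set.mem_univ j))
      simpa using this)
  rw [bigCube_vol, one_mul] at h2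
  exact h1.trans ((le_abs_self _).trans h2)

lemma le_sup_theta (d m : ℕ) (hdm : d ≠ 0 ∨ m = 0) (n : Fin d → ℕ) (t : (Fin d → ℝ) → ℝ)
    (ht : t ∈ TrigClass d n) (c : ℝ)
    (hc : ∀ u : Fin m → Fin d → ℝ → ℝ,
      Integrable (fun x : Fin d → ℝ => ∑ s, ∏ i, u s i (x i)) (volume.restrict (bigCube d)) →
      c ≤ ∫ x in bigCube d, |t x - ∑ s, ∏ i, u s i (x i)|) :
    c ≤ ⨆ t ∈ TrigClass d n, theta1 d m (volume.restrict (bigCube d)) t := by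
  have h1 : c ≤ theta1 d m (volume.restrict (bigCube d)) t := by
    unfold theta1
    refine le_csInf ?_ ?_
    · refine ⟨_, fun _ _ _ => 0, fun _ _ => measurable_const, ?_, rfl⟩
      rcases hdm with h | h
      · simp [h]
      · subst h; simp
    · rintro r ⟨u, -, hu, rfl⟩
      exact hc u hu
  refine le_ciSup_of_le ⟨(2 * Real.pi) ^ d, ?_⟩ t ?_
  · rintro _ ⟨t', rfl⟩
    by_cases ht' : t' ∈ TrigClass d n
    · simp only [ht', ciSup_unique]
      exact theta_bdd d m hdm n t' ht'
    · simp only [ht']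
      rw [Real.iSup_of_isEmpty]
      have := Real.pi_pos
      positivity
  · simpa only [ht, ciSup_unique] using h1

end Aux

/-- `Θ_m(T(n)_∞, L₁[-π,π]^d) ≥ c₂(d) > 0` whenever `m ≤ c₁(d) (n₁⋯n_d)/max_j n_j`. -/
theorem theta_trig_lower (d : ℕ) :
    ∃ c₁ : ℝ, 0 < c₁ ∧ ∃ c₂ : ℝ, 0 < c₂ ∧
      ∀ n : Fin d → ℕ, ∀ m : ℕ,
        (m : ℝ) ≤ c₁ * (∏ j, n j : ℕ) / (Finset.univ.sup n : ℕ) →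
        c₂ ≤ ⨆ t ∈ TrigClass d n,
          theta1 d m (volume.restrict (Set.univ.pi fun _ => Set.Icc (-Real.pi) Real.pi)) t := by
  have hs := sig_pos
  have hs4 := sig_le
  have hd0 : (0:ℝ) ≤ d := by positivity
  refine ⟨1 / (8 * (d + 1) * (4 + d)), by positivity, sig / 80 * (sig / (d + 1)) ^ d,
    by positivity, fun n m hm => ?_⟩
  by_cases hm0 : m = 0
  · subst hm0
    refine le_sup_theta d 0 (Or.inr rfl) n _ (one_mem_trig d n) _ fun u _ => ?_
    have hδ1 : sig / (d + 1) ≤ 1 := by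
      have := div_le_self hs.le (by linarith : (1:ℝ) ≤ d + 1)
      linarith
    have h1 : (sig / (d + 1)) ^ d ≤ 1 := pow_le_one₀ (by positivity) hδ1
    have h2 : (1:ℝ) ≤ (2 * Real.pi) ^ d := one_le_pow₀ (by linarith [Real.pi_gt_three])
    have h3 : ∫ x in bigCube d, |(1:ℝ) - ∑ s : Fin 0, ∏ i, u s i (x i)| = (2 * Real.pi) ^ d := by
      simp only [Finset.univ_eq_empty, Finset.sum_empty, sub_zero, abs_one]
      rw [setIntegral_const, bigCube_vol, smul_eq_mul, mul_one]
    have h4 : sig / 80 * (sig / (d + 1)) ^ d ≤ 1 :=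
      mul_le_one₀ (by linarith) (by positivity) h1
    exact (h4.trans h2).trans h3.ge
  · have hmpos : (1:ℝ) ≤ m := by exact_mod_cast Nat.one_le_iff_ne_zero.mpr hm0
    have hsup : Finset.univ.sup n ≠ 0 := by
      intro h
      rw [h] at hm
      simp at hm
      exact hm0 hm
    have hdne : d ≠ 0 := by
      rintro rfl
      simp at hsup
    have hprod : ∏ j, n j ≠ 0 := by
      intro h
      rw [h] at hm
      simp at hm
      exact hm0 hm
    have hn : ∀ j, 0 < n j := fun j =>
      Nat.pos_of_ne_zero fun h => hprod (Finset.prod_eq_zero (Finset.mem_univ j) h)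
    have hsupR : (0:ℝ) < (Finset.univ.sup n : ℕ) := by exact_mod_cast Nat.pos_of_ne_zero hsup
    rw [le_div_iff₀ hsupR] at hm
    have hm' : (m:ℝ) * (Finset.univ.sup n : ℕ) * (8 * (d + 1) * (4 + d)) ≤ (∏ j, n j : ℕ) := by
      rw [one_div, inv_mul_eq_div, le_div_iff₀ (by positivity)] at hm
      exact hm
    have hmN : m * Finset.univ.sup n * (8 * (d + 1) * (4 + d)) ≤ ∏ j, n j := by
      exact_mod_cast hm'
    have hsum : ∑ j, n j ≤ d * Finset.univ.sup n := by
      calc ∑ j, n j ≤ ∑ _j : Fin d, Finset.univ.sup n :=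
            Finset.sum_le_sum fun j hj => Finset.le_sup hj
        _ = _ := by simp
    have hbound : 8 * (m * ∑ j, n j) * (4 + d) ≤ ∏ j, n j := by
      refine le_trans ?_ hmN
      calc 8 * (m * ∑ j, n j) * (4 + d) ≤ 8 * (m * ((d + 1) * Finset.univ.sup n)) * (4 + d) := by
            gcongr
            exact hsum.trans (Nat.mul_le_mul_right _ (Nat.le_succ d))
        _ = _ := by ring
    obtain ⟨t, ht, htu⟩ := exists_bad (Nat.pos_of_ne_zero hdne) n hn m hbound
    exact le_sup_theta d m (Or.inl hdne) n t ht _ htu
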